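/- Let M = M_n(ℂ) be the C*-algebra of n×n complex matrices (n ≥ 1). Then M is normally ternary weakly amenable: every conjugate-linear map δ : M → M* satisfying the triple derivation identity δ({x,y,z}) = {δ(x),y,z} + {x,δ(y),z} + {x,y,δ(z)} for all x, y, z ∈ M is an inner triple derivation, i.e., a finite sum of maps of the form L(b,φ) - L(φ,b) with b ∈ M, φ ∈ M*. -/

import Mathlib

noncomputable section

/-- The C*-algebra of `n×n` complex matrices (with conjugate-transpose involution). -/
abbrev Mat (n : ℕ) := Matrix (Fin n) (Fin n) ℂ

variable {n : ℕ}

/-- The triple product `{a,b,c} = (a b* c + c b* a)/2`. -/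
def tp (a b c : Mat n) : Mat n := (2 : ℂ)⁻¹ • (a * star b * c + c * star b * a)

/-- The module triple product `{a,b,φ} = {φ,b,a}`, given by `x ↦ φ({b,a,x})`. -/
def tOut (a b : Mat n) (φ : Mat n → ℂ) : Mat n → ℂ := fun x => φ (tp b a x)

/-- The module triple product `{a,φ,b}`, given by `x ↦ conj (φ ({a,x,b}))`. -/
def tMid (a : Mat n) (φ : Mat n → ℂ) (b : Mat n) : Mat n → ℂ :=
  fun x => starRingEnd ℂ (φ (tp a x b))

/-- The adjoint functional `φ*(x) = conj (φ (x*))`. -/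
def fstar (φ : Mat n → ℂ) : Mat n → ℂ := fun x => starRingEnd ℂ (φ (star x))

/-- The inner binary derivation `D_ψ(x) = ψ·x - x·ψ`, so `D_ψ(x)(y) = ψ(x y - y x)`. -/
def Dd (ψ : Mat n → ℂ) (x : Mat n) : Mat n → ℂ := fun y => ψ (x * y - y * x)

/-!
Through the pairing `(q, w) ↦ tr (q* w)`, a triple derivation of `M` into `M*` becomes a linear
triple derivation `T` of `M` into itself, for which `T 1` is skew-adjoint. Subtracting
`x ↦ (T 1 x + x T 1) / 2` leaves a Jordan derivation `D` commuting with the involution.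

Jordan derivations of a matrix algebra are commutators, by averaging over the matrix units `eᵢⱼ`.
Put `P w = ∑ᵢⱼ (D eᵢⱼ w eⱼᵢ + eᵢⱼ w D eⱼᵢ)`. As `∑ᵢⱼ eᵢⱼ w eⱼᵢ` is the scalar `tr w`, applying `D`
to `∑ᵢⱼ (eᵢⱼ w eⱼᵢ + eⱼᵢ w eᵢⱼ)` gives `P w = -tr (D w)`, and applying it to
`∑ᵢⱼ (eᵢⱼ w eⱼᵢ + eⱼᵢ eᵢⱼ w)` gives `n D w = P w + A w + w B` for fixed matrices `A` and `B`. Taking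
`w = 1` yields `B = -A`, and then taking traces yields `tr (D w) = 0`.

Hence `T x = u x + x v` with `u` and `v` skew-adjoint. Multiplication by `u` is inner because
`∑ᵢⱼ (L(eᵢⱼ, -u eᵢⱼ) - L(-u eᵢⱼ, eᵢⱼ))` maps `x` to `n u x + tr(u) x`, while `x ↦ u x + x u` is
`L(u, 1) - L(1, u)`.
-/

open Matrix

section MatrixUnits

variable {ι R N : Type*} [Fintype ι] [DecidableEq ι] [CommSemiring R] [AddCommMonoid N]
  [Module R N]

lemma sum_single_mul_mul_single (w : Matrix ι ι R) :
    ∑ i, ∑ j, single i j 1 * w * single j i 1 = w.trace • (1 : Matrix ι ι R) := by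
  simp only [single_mul_mul_single, one_mul, mul_one, ← sum_single_one, trace, diag_apply,
    Finset.sum_smul_sum, smul_single, smul_eq_mul]
  exact Finset.sum_comm

lemma sum_single_mul_single :
    ∑ i, ∑ j, single i j 1 * single j i 1 = (Fintype.card ι : R) • (1 : Matrix ι ι R) := by
  simpa using sum_single_mul_mul_single (1 : Matrix ι ι R)

lemma single_one_mul_eq_sum (w : Matrix ι ι R) (i j : ι) :
    single i j 1 * w = ∑ k, w j k • single i k 1 := by
  ext a b
  simp [mul_apply, Matrix.sum_apply, single_apply, ite_and]

lemma mul_single_one_eq_sum (w : Matrix ι ι R) (i j : ι) :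
    w * single i j 1 = ∑ k, w k i • single k j 1 := by
  ext a b
  simp [mul_apply, Matrix.sum_apply, single_apply, ite_and]

/-- In tensor form: `∑ᵢⱼ eᵢⱼ w ⊗ eⱼᵢ = ∑ᵢⱼ eᵢⱼ ⊗ w eⱼᵢ`. -/
lemma sum_bilin_single_mul (B : Matrix ι ι R →ₗ[R] Matrix ι ι R →ₗ[R] N) (w : Matrix ι ι R) :
    ∑ i, ∑ j, B (single i j 1 * w) (single j i 1) =
      ∑ i, ∑ j, B (single i j 1) (w * single j i 1) := by
  simp only [single_one_mul_eq_sum, mul_single_one_eq_sum, map_sum, map_smul,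
    LinearMap.sum_apply, LinearMap.smul_apply]
  exact Finset.sum_congr rfl fun i _ => Finset.sum_comm

end MatrixUnits

section JordanDerivation

variable {R A : Type*} [CommRing R] [Ring A] [Algebra R A]

/-- Jordan derivations of an associative algebra, that is, derivations for the product
`x * y + y * x`. -/
def IsJordanDerivation (D : A →ₗ[R] A) : Prop :=
  ∀ x y, D (x * y + y * x) = D x * y + x * D y + (D y * x + y * D x)

namespace IsJordanDerivation

lemma map_one {D : A →ₗ[R] A} (hD : IsJordanDerivation D) (h2 : IsUnit (2 : R)) : D 1 = 0 := by
  rw [← h2.smul_eq_zero, two_smul]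
  simpa using hD 1 1

lemma map_mul_mul_add {D : A →ₗ[R] A} (hD : IsJordanDerivation D) (h2 : IsUnit (2 : R))
    (x y z : A) :
    D (x * y * z + z * y * x) = D x * y * z + x * D y * z + x * y * D z +
      (D z * y * x + z * D y * x + z * y * D x) := by
  rw [← h2.smul_left_cancel, ← map_smul]
  -- With `x ∘ y = xy + yx`: `2 (xyz + zyx) = (x ∘ y) ∘ z + x ∘ (y ∘ z) - y ∘ (x ∘ z)`.
  have key : (2 : R) • (x * y * z + z * y * x) =
      ((x * y + y * x) * z + z * (x * y + y * x)) + (x * (y * z + z * y) + (y * z + z * y) * x) -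
        (y * (x * z + z * x) + (x * z + z * x) * y) := by
    rw [two_smul]
    noncomm_ring
  rw [key, map_sub, map_add, hD, hD, hD, hD, hD, hD, two_smul]
  noncomm_ring

variable {ι : Type*} [Fintype ι] [DecidableEq ι] {D : Matrix ι ι R →ₗ[R] Matrix ι ι R}

lemma sum_map_single_mul_mul_single_add (hD : IsJordanDerivation D) (h2 : IsUnit (2 : R))
    (w : Matrix ι ι R) :
    ∑ i, ∑ j, (D (single i j 1) * w * single j i 1 + single i j 1 * w * D (single j i 1)) =
      -(D w).trace • 1 := by
  set F : ι → ι → Matrix ι ι R :=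
    fun i j => D (single i j 1) * w * single j i 1 + single i j 1 * w * D (single j i 1)
  have sum_symm (f : ι → ι → Matrix ι ι R) :
      ∑ i, ∑ j, (f i j + f j i) = (2 : R) • ∑ i, ∑ j, f i j := by
    simp only [Finset.sum_add_distrib, two_smul]
    rw [Finset.sum_comm (f := fun i j => f j i)]
  have expand : ∑ i, ∑ j, D (single i j 1 * w * single j i 1 + single j i 1 * w * single i j 1) =
      ∑ i, ∑ j, (F i j + single i j 1 * D w * single j i 1 +
        (F j i + single j i 1 * D w * single i j 1)) := by
    simp only [hD.map_mul_mul_add h2, F]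
    refine Finset.sum_congr rfl fun i _ => Finset.sum_congr rfl fun j _ => ?_
    abel
  simp only [← map_sum] at expand
  rw [sum_symm fun i j => single i j 1 * w * single j i 1, sum_single_mul_mul_single,
    map_smul, map_smul, hD.map_one h2, smul_zero, smul_zero,
    sum_symm fun i j => F i j + single i j 1 * D w * single j i 1, eq_comm,
    h2.smul_eq_zero] at expand
  simp only [Finset.sum_add_distrib, sum_single_mul_mul_single] at expand
  rw [neg_smul]
  exact eq_neg_of_add_eq_zero_left expand

lemma card_smul_apply (hD : IsJordanDerivation D) (h2 : IsUnit (2 : R)) (w : Matrix ι ι R) :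
    (Fintype.card ι : R) • D w = (∑ i, ∑ j, D (single j i 1) * single i j 1) * w +
      w * (∑ i, ∑ j, single j i 1 * D (single i j 1)) - (D w).trace • 1 := by
  have shift_left : ∑ i, ∑ j, D (single i j 1 * w) * single j i 1 =
      ∑ i, ∑ j, D (single i j 1) * w * single j i 1 := by
    simpa [mul_assoc] using sum_bilin_single_mul (LinearMap.mul R _ ∘ₗ D) w
  have shift_right : ∑ i, ∑ j, single j i 1 * D (single i j 1 * w) =
      w * ∑ i, ∑ j, single j i 1 * D (single i j 1) := by
    simpa [mul_assoc, Finset.mul_sum] using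
      sum_bilin_single_mul ((LinearMap.mul R _).flip ∘ₗ D) w
  have sum_anticomm : ∑ i, ∑ j, (single i j 1 * w * single j i 1 +
      single j i 1 * (single i j 1 * w)) = w.trace • 1 + (Fintype.card ι : R) • w := by
    simp only [Finset.sum_add_distrib, sum_single_mul_mul_single, ← mul_assoc, ← Finset.sum_mul]
    rw [Finset.sum_comm (f := fun i j => single j i (1 : R) * single i j 1), sum_single_mul_single,
      smul_mul_assoc, one_mul]
  calc (Fintype.card ι : R) • D w
      = ∑ i, ∑ j, D (single i j 1 * w * single j i 1 + single j i 1 * (single i j 1 * w)) := by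
        simp only [← map_sum]
        rw [sum_anticomm, map_add, map_smul, map_smul, hD.map_one h2, smul_zero, zero_add]
    _ = ∑ i, ∑ j, (D (single i j 1) * w * single j i 1 + single i j 1 * w * D (single j i 1)) +
          ((∑ i, ∑ j, D (single j i 1) * single i j 1) * w +
            w * ∑ i, ∑ j, single j i 1 * D (single i j 1)) := by
        simp only [hD _ (single _ _ 1), Finset.sum_add_distrib, shift_left, shift_right,
          Finset.sum_mul]
        simp only [mul_assoc]
    _ = _ := by
        rw [hD.sum_map_single_mul_mul_single_add h2, neg_smul]
        abel

theorem exists_eq_commutator (hD : IsJordanDerivation D) (h2 : IsUnit (2 : R))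
    (hι : IsUnit (Fintype.card ι : R)) :
    ∃ h : Matrix ι ι R, ∀ x, D x = h * x - x * h := by
  set A : Matrix ι ι R := ∑ i, ∑ j, D (single j i 1) * single i j 1
  set B : Matrix ι ι R := ∑ i, ∑ j, single j i 1 * D (single i j 1)
  have card_smul (w : Matrix ι ι R) :
      (Fintype.card ι : R) • D w = A * w + w * B - (D w).trace • 1 := hD.card_smul_apply h2 w
  have hB : B = -A := by
    have := card_smul 1
    simp only [hD.map_one h2, smul_zero, mul_one, one_mul, trace_zero, zero_smul, sub_zero] at this
    exact (neg_eq_of_add_eq_zero_right this.symm).symm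
  have trace_eq_zero (w : Matrix ι ι R) : (D w).trace = 0 := by
    have := congrArg trace (card_smul w)
    rw [hB, trace_sub, trace_add, mul_neg, trace_neg, trace_mul_comm A, trace_smul, trace_smul,
      trace_one, smul_eq_mul, smul_eq_mul] at this
    refine (h2.mul hι).mul_right_eq_zero.1 ?_
    linear_combination this
  obtain ⟨c, hc⟩ := hι.exists_left_inv
  refine ⟨c • A, fun x => ?_⟩
  have := card_smul x
  rw [trace_eq_zero, zero_smul, sub_zero, hB, mul_neg, ← sub_eq_add_neg] at this
  rw [smul_mul_assoc, mul_smul_comm, ← smul_sub, ← this, smul_smul, hc, one_smul]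

end IsJordanDerivation

end JordanDerivation

section TripleDerivation

lemma tp_comm (a b c : Mat n) : tp a b c = tp c b a := by
  rw [tp, tp, add_comm]

/-- Triple derivations of `M` into itself; these are complex-linear, while those into `M*` are
conjugate-linear. -/
def IsTripleDerivation (T : Mat n →ₗ[ℂ] Mat n) : Prop :=
  ∀ x y z, T (tp x y z) = tp (T x) y z + tp x (T y) z + tp x y (T z)

/-- The map `x ↦ T x - (T 1 * x + x * T 1) / 2`; if `T` is a triple derivation, this is the
triple derivation vanishing at `1` that differs from `T` by an inner one. -/
def jordanPart (T : Mat n →ₗ[ℂ] Mat n) : Mat n →ₗ[ℂ] Mat n :=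
  T - (2⁻¹ : ℂ) • (LinearMap.mulLeft ℂ (T 1) + LinearMap.mulRight ℂ (T 1))

lemma jordanPart_apply (T : Mat n →ₗ[ℂ] Mat n) (x : Mat n) :
    jordanPart T x = T x - (2⁻¹ : ℂ) • (T 1 * x + x * T 1) :=
  rfl

namespace IsTripleDerivation

variable {T : Mat n →ₗ[ℂ] Mat n}

lemma map_mul_star_mul_add (hT : IsTripleDerivation T) (x y z : Mat n) :
    T (x * star y * z + z * star y * x) =
      (T x * star y * z + z * star y * T x) + (x * star (T y) * z + z * star (T y) * x) +
        (x * star y * T z + T z * star y * x) := by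
  have h := hT x y z
  simp only [tp, map_smul, ← smul_add] at h
  exact smul_right_injective _ (inv_ne_zero two_ne_zero) h

lemma star_map_one (hT : IsTripleDerivation T) : star (T 1) = -T 1 := by
  have h := hT.map_mul_star_mul_add 1 1 1
  simp only [star_one, mul_one, one_mul, map_add] at h
  have h2 : (2 : ℂ) • (star (T 1) + T 1) = 0 := by
    rw [two_smul]
    linear_combination (norm := noncomm_ring) -h
  exact eq_neg_of_add_eq_zero_left ((smul_eq_zero_iff_right two_ne_zero).1 h2)

lemma isJordanDerivation_jordanPart (hT : IsTripleDerivation T) :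
    IsJordanDerivation (jordanPart T) := by
  intro x y
  have h := hT.map_mul_star_mul_add x 1 y
  simp only [star_one, mul_one, hT.star_map_one] at h
  simp only [jordanPart_apply, h]
  simp only [mul_add, add_mul, mul_sub, sub_mul, mul_neg, neg_mul, smul_mul_assoc, mul_smul_comm,
    mul_assoc]
  module

lemma jordanPart_star (hT : IsTripleDerivation T) (x : Mat n) :
    jordanPart T (star x) = star (jordanPart T x) := by
  have h := hT 1 x 1
  simp only [tp, one_mul, mul_one, ← two_smul ℂ, inv_smul_smul₀ (two_ne_zero (α := ℂ))] at h
  simp only [jordanPart_apply, h, star_sub, star_smul, star_add, star_mul, hT.star_map_one,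
    star_inv₀, star_ofNat, neg_mul, mul_neg]
  module

lemma exists_skewAdjoint_commutator [NeZero n] (hT : IsTripleDerivation T) :
    ∃ k ∈ skewAdjoint (Mat n), ∀ x, jordanPart T x = k * x - x * k := by
  obtain ⟨h, hh⟩ := hT.isJordanDerivation_jordanPart.exists_eq_commutator
    (IsUnit.mk0 _ two_ne_zero) (IsUnit.mk0 _ (by simp [NeZero.ne n]))
  refine ⟨(2⁻¹ : ℂ) • (h - star h), ?_, fun x => ?_⟩
  · rw [skewAdjoint.mem_iff, star_smul, star_sub, star_star, star_inv₀, star_ofNat, ← smul_neg,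
      neg_sub]
  · have hstar : jordanPart T x = x * star h - star h * x := by
      rw [← star_star x, hT.jordanPart_star, hh, star_sub, star_mul, star_mul, star_star]
    simp only [smul_mul_assoc, mul_smul_comm, sub_mul, mul_sub]
    linear_combination (norm := module) (2⁻¹ : ℂ) • (hh x + hstar)

theorem exists_skewAdjoint_mul_add_mul [NeZero n] (hT : IsTripleDerivation T) :
    ∃ u ∈ skewAdjoint (Mat n), ∃ v ∈ skewAdjoint (Mat n),
      T = LinearMap.mulLeft ℂ u + LinearMap.mulRight ℂ v := by
  obtain ⟨k, hk, hTk⟩ := hT.exists_skewAdjoint_commutator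
  have ha : (2⁻¹ : ℝ) • T 1 ∈ skewAdjoint (Mat n) := skewAdjoint.smul_mem _ hT.star_map_one
  refine ⟨_, add_mem ha hk, _, sub_mem ha hk, LinearMap.ext fun x => ?_⟩
  have := hTk x
  rw [jordanPart_apply] at this
  simp only [LinearMap.add_apply, LinearMap.mulLeft_apply, LinearMap.mulRight_apply, add_mul,
    mul_sub, smul_mul_assoc, mul_smul_comm]
  linear_combination (norm := module) this

end IsTripleDerivation

end TripleDerivation

section InnerTripleDerivation

/-- The operator `L(b, q) : x ↦ {b, q, x}` on `M`. -/
def tripleMul (b q : Mat n) : Mat n →ₗ[ℂ] Mat n :=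
  (2⁻¹ : ℂ) • (LinearMap.mulLeft ℂ (b * star q) + LinearMap.mulRight ℂ (star q * b))

lemma tripleMul_apply (b q x : Mat n) : tripleMul b q x = tp b q x := by
  simp [tripleMul, tp, mul_assoc]

/-- The triple derivation `L(b, q) - L(q, b)` of `M`. -/
def innerTripleDerivation (b q : Mat n) : Mat n →ₗ[ℂ] Mat n :=
  tripleMul b q - tripleMul q b

lemma innerTripleDerivation_apply (b q x : Mat n) :
    innerTripleDerivation b q x =
      (2⁻¹ : ℂ) • ((b * star q - q * star b) * x + x * (star q * b - star b * q)) := by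
  simp only [innerTripleDerivation, LinearMap.sub_apply, tripleMul_apply, tp, ← smul_sub]
  noncomm_ring

lemma innerTripleDerivation_smul_left (r : ℝ) (b q : Mat n) :
    innerTripleDerivation (r • b) q = r • innerTripleDerivation b q := by
  ext1 x
  simp only [LinearMap.smul_apply, innerTripleDerivation_apply, star_smul, star_trivial,
    smul_mul_assoc, mul_smul_comm, ← smul_sub, ← smul_add, smul_comm r]

/-- The space of inner triple derivations of `M`: the span of the maps `L(b, q) - L(q, b)`, over
`ℝ` because these are only real-linear in `b` and in `q`. -/
def innerTripleDerivations (n : ℕ) : Submodule ℝ (Mat n →ₗ[ℂ] Mat n) :=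
  Submodule.span ℝ (Set.range fun p : Mat n × Mat n => innerTripleDerivation p.1 p.2)

lemma innerTripleDerivation_mem_innerTripleDerivations (b q : Mat n) :
    innerTripleDerivation b q ∈ innerTripleDerivations n :=
  Submodule.subset_span ⟨(b, q), rfl⟩

namespace innerTripleDerivations

lemma exists_eq_sum {T : Mat n →ₗ[ℂ] Mat n}
    (hT : T ∈ innerTripleDerivations n) :
    ∃ (m : ℕ) (b q : Fin m → Mat n), T = ∑ i, innerTripleDerivation (b i) (q i) := by
  obtain ⟨m, r, g, rfl⟩ := Submodule.mem_span_set'.1 hT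
  choose p hp using fun i => (g i).2
  exact ⟨m, fun i => r i • (p i).1, fun i => (p i).2, by
    simp only [innerTripleDerivation_smul_left, ← hp]⟩

lemma mulLeft_add_mulRight_mem {u : Mat n} (hu : u ∈ skewAdjoint (Mat n)) :
    LinearMap.mulLeft ℂ u + LinearMap.mulRight ℂ u ∈ innerTripleDerivations n := by
  convert innerTripleDerivation_mem_innerTripleDerivations u 1 using 1
  ext1 x
  simp only [innerTripleDerivation_apply, skewAdjoint.mem_iff.1 hu, LinearMap.add_apply,
    LinearMap.mulLeft_apply, LinearMap.mulRight_apply, star_one, mul_one, one_mul]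
  simp only [sub_neg_eq_add, add_mul, mul_add]
  module

lemma smul_id_mem {c : ℂ} (hc : c ∈ skewAdjoint ℂ) :
    c • LinearMap.id ∈ innerTripleDerivations n := by
  have hskew : (2⁻¹ * c) • (1 : Mat n) ∈ skewAdjoint (Mat n) := by
    rw [skewAdjoint.mem_iff, star_smul, star_mul', skewAdjoint.mem_iff.1 hc]
    simp
  convert mulLeft_add_mulRight_mem hskew using 1
  ext1 x
  simp only [LinearMap.add_apply, LinearMap.smul_apply, LinearMap.id_apply,
    LinearMap.mulLeft_apply, LinearMap.mulRight_apply, smul_mul_assoc, mul_smul_comm, one_mul,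
    mul_one]
  module

lemma sum_innerTripleDerivation_single {u : Mat n} (hu : u ∈ skewAdjoint (Mat n)) :
    ∑ i, ∑ j, innerTripleDerivation (single i j 1) (-(u * single i j 1)) =
      n • LinearMap.mulLeft ℂ u + u.trace • LinearMap.id := by
  have hterm (i j : Fin n) (x : Mat n) :
      innerTripleDerivation (single i j 1) (-(u * single i j 1)) x =
        (2⁻¹ : ℂ) • ((single i j 1 * single j i 1 * u + u * (single i j 1 * single j i 1)) * x) +
          x * (single j i 1 * u * single i j 1) := by
    simp only [innerTripleDerivation_apply, star_neg, star_mul, skewAdjoint.mem_iff.1 hu,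
      star_eq_conjTranspose, conjTranspose_single, star_one, mul_neg, neg_mul, neg_neg,
      sub_neg_eq_add, mul_add, add_mul, mul_assoc]
    module
  ext1 x
  simp only [LinearMap.sum_apply, hterm, Finset.sum_add_distrib, ← Finset.smul_sum,
    ← Finset.sum_mul, ← Finset.mul_sum, sum_single_mul_single]
  rw [Finset.sum_comm (f := fun i j => single j i 1 * u * single i j 1), sum_single_mul_mul_single]
  simp only [Fintype.card_fin, smul_mul_assoc, mul_smul_comm, one_mul, mul_one, add_mul,
    LinearMap.add_apply, LinearMap.smul_apply, LinearMap.mulLeft_apply, LinearMap.id_apply]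
  module

lemma mulLeft_mem [NeZero n] {u : Mat n} (hu : u ∈ skewAdjoint (Mat n)) :
    LinearMap.mulLeft ℂ u ∈ innerTripleDerivations n := by
  have htrace : u.trace ∈ skewAdjoint ℂ := by
    rw [skewAdjoint.mem_iff, ← trace_conjTranspose, ← star_eq_conjTranspose,
      skewAdjoint.mem_iff.1 hu, trace_neg]
  have hsum : n • LinearMap.mulLeft ℂ u + u.trace • LinearMap.id ∈
      innerTripleDerivations n := by
    rw [← sum_innerTripleDerivation_single hu]
    exact sum_mem fun i _ => sum_mem fun j _ =>
      innerTripleDerivation_mem_innerTripleDerivations _ _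
  rw [Submodule.add_mem_iff_left _ (smul_id_mem htrace), ← Nat.cast_smul_eq_nsmul ℝ] at hsum
  exact (Submodule.smul_mem_iff _ (NeZero.ne (n : ℝ))).1 hsum

lemma mulRight_mem [NeZero n] {v : Mat n} (hv : v ∈ skewAdjoint (Mat n)) :
    LinearMap.mulRight ℂ v ∈ innerTripleDerivations n :=
  (Submodule.add_mem_iff_right _ (mulLeft_mem hv)).1 (mulLeft_add_mulRight_mem hv)

end innerTripleDerivations

theorem IsTripleDerivation.exists_eq_sum [NeZero n] {T : Mat n →ₗ[ℂ] Mat n}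
    (hT : IsTripleDerivation T) :
    ∃ (m : ℕ) (b q : Fin m → Mat n), T = ∑ i, innerTripleDerivation (b i) (q i) := by
  obtain ⟨u, hu, v, hv, rfl⟩ := hT.exists_skewAdjoint_mul_add_mul
  exact innerTripleDerivations.exists_eq_sum
    (add_mem (innerTripleDerivations.mulLeft_mem hu) (innerTripleDerivations.mulRight_mem hv))

end InnerTripleDerivation

section TraceDuality

/-- The conjugate-linear identification of `M` with `M*` sending `q` to the functional
`w ↦ tr (q* w)`. -/
def traceDual : Mat n ≃ₗ⋆[ℂ] Module.Dual ℂ (Mat n) :=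
  (starLinearEquiv ℂ).trans <|
    LinearMap.linearEquivOfInjective ((LinearMap.mul ℂ (Mat n)).compr₂ (traceLinearMap _ ℂ ℂ))
      (fun _ _ h => ext_iff_trace_mul_right.2 (LinearMap.congr_fun h)) Subspace.dual_finrank_eq.symm

lemma traceDual_apply (q w : Mat n) : traceDual q w = (star q * w).trace :=
  rfl

lemma tOut_traceDual (a b q : Mat n) : tOut a b (traceDual q) = traceDual (tp a b q) := by
  ext w
  have hcycle : (star q * (w * (star a * b))).trace = (star a * (b * (star q * w))).trace := by
    simpa only [mul_assoc] using trace_mul_comm (star q * w) (star a * b)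
  simp only [tOut, traceDual_apply, tp, star_smul, star_add, star_mul, star_star, star_inv₀,
    star_ofNat, smul_mul_assoc, mul_smul_comm, trace_smul, mul_add, add_mul, trace_add, mul_assoc,
    hcycle]

lemma tMid_traceDual (a b q : Mat n) : tMid a (traceDual q) b = traceDual (tp a q b) := by
  ext w
  have hcycle (c d : Mat n) :
      (star c * (w * (star d * q))).trace = (star d * (q * (star c * w))).trace := by
    simpa only [mul_assoc] using trace_mul_comm (star c * w) (star d * q)
  simp only [tMid, traceDual_apply, starRingEnd_apply, ← trace_conjTranspose,
    ← star_eq_conjTranspose, tp, star_smul, star_add, star_mul, star_star, star_inv₀,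
    star_ofNat, smul_mul_assoc, trace_smul, add_mul, trace_add, mul_assoc, hcycle]
  rw [add_comm]

lemma tMid_sub_tOut_traceDual (a b q : Mat n) :
    tMid b (traceDual q) a - tOut a b (traceDual q) = traceDual (innerTripleDerivation b q a) := by
  rw [tMid_traceDual, tOut_traceDual, innerTripleDerivation, LinearMap.sub_apply, tripleMul_apply,
    tripleMul_apply, tp_comm a b q, map_sub]
  rfl

end TraceDuality

/-- `M_n(ℂ)` is normally ternary weakly amenable: every triple derivation from `M`
into `M*` is an inner triple derivation. -/
theorem matrix_normally_ternary_weakly_amenable (n : ℕ) (hn : 1 ≤ n)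
    (δ : Mat n → Module.Dual ℂ (Mat n))
    (hadd : ∀ x y : Mat n, δ (x + y) = δ x + δ y)
    (hsmul : ∀ (c : ℂ) (x : Mat n), δ (c • x) = starRingEnd ℂ c • δ x)
    (hder : ∀ x y z : Mat n,
      ⇑(δ (tp x y z)) = tOut z y ⇑(δ x) + tMid x ⇑(δ y) z + tOut x y ⇑(δ z)) :
    ∃ (m : ℕ) (bs : Fin m → Mat n) (φs : Fin m → Module.Dual ℂ (Mat n)),
      ∀ a : Mat n,
        ⇑(δ a) = ∑ i, (tMid (bs i) ⇑(φs i) a - tOut a (bs i) ⇑(φs i)) := by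
  have : NeZero n := ⟨Nat.one_le_iff_ne_zero.1 hn⟩
  let δ' : Mat n →ₗ⋆[ℂ] Module.Dual ℂ (Mat n) := ⟨⟨δ, hadd⟩, hsmul⟩
  let T : Mat n →ₗ[ℂ] Mat n := traceDual.symm.toLinearMap ∘ₛₗ δ'
  have hδ (x : Mat n) : δ x = traceDual (T x) := (traceDual.apply_symm_apply (δ x)).symm
  have hT : IsTripleDerivation T := fun x y z => by
    apply traceDual.injective
    apply DFunLike.coe_injective
    rw [← hδ, hder, hδ, hδ, hδ, tOut_traceDual, tMid_traceDual, tOut_traceDual, tp_comm z y]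
    simp only [map_add]
    rfl
  obtain ⟨m, b, q, hTbq⟩ := hT.exists_eq_sum
  refine ⟨m, b, fun i => traceDual (q i), fun a => ?_⟩
  simp only [tMid_sub_tOut_traceDual, hδ, hTbq, LinearMap.sum_apply, map_sum, LinearMap.coe_sum]
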